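/- Define H(κ) = 2 F(κ) (E(κ) - ((2+κ)/3) F(κ)) for κ ≥ 0; then H(0) = π²/6, H is continuous and strictly decreasing on [0, ∞), H(κ) < 0 for all sufficiently large κ, and consequently for every integer k ≥ 3 there exists a unique κ_k > 0 such that H(κ_k) = 2π²/(3k²); moreover κ = 0 is the unique κ ≥ 0 with H(κ) = 2π²/(3·2²) = π²/6. -/

import Mathlib

/-!
Write `w = 1 + κ sin² φ`. Differentiating under the integral sign and using the total derivative
of `sin φ cos φ / √w`, which gives `(1 + κ) ∫ w^{-3/2} = E`, one finds for `κ > 0`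

  `E' = (E - F) / (2κ)`,  `F' = (E - (1 + κ) F) / (2κ(1 + κ))`,
  `3κ(1 + κ) H' = 3 E² - 2 (2 + κ) E F + (1 + κ) F²`.

The right-hand side is `F²` times a convex quadratic in `r = E / F`, with value `-κ` at `r = 1` and
`-κ²/4` at `r = 1 + κ/2`. Hence `H' < 0` once `F ≤ E ≤ (1 + κ/2) F` (`Fell_le_Eell`,
`Eell_le_mul_Fell`); the second inequality is Chebyshev's: `sin² φ - 1/2` has mean zero and is
negatively correlated with the weight `1/√w`.

For large `κ`, with `t = √κ`, the bounds `√w ≤ 1 + t sin φ ≤ 1 + t φ` yield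
`E ≤ π/2 + t` and `F ≥ log (1 + t π/2) / t`, and the logarithm makes `H` negative
(`Hfun_neg_of_large`). Existence and uniqueness of `κ_k` then follow from the intermediate value
theorem and strict monotonicity.
-/

noncomputable section

open Real

/-- The complete elliptic-type integral `F(κ) = ∫₀^{π/2} dφ/√(1 + κ sin²φ)`. -/
def Fell (κ : ℝ) : ℝ := ∫ φ in (0:ℝ)..(π / 2), 1 / Real.sqrt (1 + κ * Real.sin φ ^ 2)

/-- The complete elliptic-type integral `E(κ) = ∫₀^{π/2} √(1 + κ sin²φ) dφ`. -/
def Eell (κ : ℝ) : ℝ := ∫ φ in (0:ℝ)..(π / 2), Real.sqrt (1 + κ * Real.sin φ ^ 2)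

/-- `H(κ) = 2 F(κ) (E(κ) - ((2+κ)/3) F(κ))`. -/
def Hfun (κ : ℝ) : ℝ := 2 * Fell κ * (Eell κ - ((2 + κ) / 3) * Fell κ)

/-! ### Differentiation under the integral sign -/

lemma continuous_comp_weight {g : ℝ → ℝ} (hg : ContinuousOn g (Set.Ici (1 / 2))) {κ : ℝ}
    (hκ : -(1 / 2) ≤ κ) : Continuous fun φ : ℝ => g (1 + κ * sin φ ^ 2) := by
  refine hg.comp_continuous (by fun_prop) fun φ => ?_
  have h1 := sin_sq_le_one φ
  have h2 := sq_nonneg (sin φ)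
  simp only [Set.mem_Ici]
  nlinarith

/-- Differentiation under the integral sign for integrals of `g (1 + κ sin² φ)`. The domain
`[1/2, ∞)` leaves room for `κ` to vary on both sides of `0`. -/
lemma hasDerivAt_integral_weight {g g' : ℝ → ℝ} {C : ℝ}
    (hg : ∀ x, 1 / 2 ≤ x → HasDerivAt g (g' x) x)
    (hg' : ContinuousOn g' (Set.Ici (1 / 2))) (hC : ∀ x, 1 / 2 ≤ x → |g' x| ≤ C)
    {κ : ℝ} (hκ : 0 ≤ κ) :
    HasDerivAt (fun κ => ∫ φ in (0:ℝ)..(π / 2), g (1 + κ * sin φ ^ 2))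
      (∫ φ in (0:ℝ)..(π / 2), g' (1 + κ * sin φ ^ 2) * sin φ ^ 2) κ := by
  have hgc : ContinuousOn g (Set.Ici (1 / 2)) := fun x hx =>
    (hg x hx).continuousAt.continuousWithinAt
  have hball : ∀ x ∈ Metric.ball κ (1 / 2), -(1 / 2) ≤ x := by
    intro x hx
    rw [Metric.mem_ball, Real.dist_eq, abs_lt] at hx
    linarith [hx.1]
  refine (intervalIntegral.hasDerivAt_integral_of_dominated_loc_of_deriv_le
    (F := fun κ φ => g (1 + κ * sin φ ^ 2))
    (F' := fun κ φ => g' (1 + κ * sin φ ^ 2) * sin φ ^ 2)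
    (bound := fun _ => C) (Metric.ball_mem_nhds κ (by norm_num : (0:ℝ) < 1 / 2))
    ?_ ?_ ?_ ?_ ?_ ?_).2
  · filter_upwards [Metric.ball_mem_nhds κ (by norm_num : (0:ℝ) < 1 / 2)] with x hx
    exact (continuous_comp_weight hgc (hball x hx)).aestronglyMeasurable
  · exact (continuous_comp_weight hgc (by linarith)).intervalIntegrable _ _
  · exact ((continuous_comp_weight hg' (by linarith)).mul (by fun_prop)).aestronglyMeasurable
  · refine Filter.Eventually.of_forall fun φ _ x hx => ?_
    have h1 := sin_sq_le_one φ
    have h2 := sq_nonneg (sin φ)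
    have h3 : 1 / 2 ≤ 1 + x * sin φ ^ 2 := by nlinarith [hball x hx]
    rw [Real.norm_eq_abs, abs_mul, abs_of_nonneg h2]
    have h4 := hC _ h3
    nlinarith [abs_nonneg (g' (1 + x * sin φ ^ 2))]
  · exact intervalIntegrable_const
  · refine Filter.Eventually.of_forall fun φ _ x hx => ?_
    have h1 := sin_sq_le_one φ
    have h2 := sq_nonneg (sin φ)
    have h3 : 1 / 2 ≤ 1 + x * sin φ ^ 2 := by nlinarith [hball x hx]
    have h4 : HasDerivAt (fun x : ℝ => 1 + x * sin φ ^ 2) (sin φ ^ 2) x := by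
      simpa using ((hasDerivAt_id x).mul_const (sin φ ^ 2)).const_add 1
    exact (hg _ h3).comp x h4

lemma half_le_sqrt {x : ℝ} (hx : 1 / 2 ≤ x) : 1 / 2 ≤ √x :=
  Real.le_sqrt_of_sq_le (by linarith)

lemma weight_ge_one {κ : ℝ} (hκ : 0 ≤ κ) (φ : ℝ) : 1 ≤ 1 + κ * sin φ ^ 2 := by
  have := mul_nonneg hκ (sq_nonneg (sin φ))
  linarith

lemma hasDerivAt_Eell_integral {κ : ℝ} (hκ : 0 ≤ κ) :
    HasDerivAt Eell (∫ φ in (0:ℝ)..(π / 2), 1 / (2 * √(1 + κ * sin φ ^ 2)) * sin φ ^ 2) κ := by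
  refine hasDerivAt_integral_weight (g := fun x => √x) (g' := fun x => 1 / (2 * √x)) (C := 1)
    (fun x hx => Real.hasDerivAt_sqrt (by linarith)) ?_ ?_ hκ
  · refine continuousOn_const.div (by fun_prop) fun x hx => ?_
    have := half_le_sqrt hx
    positivity
  · intro x hx
    have := half_le_sqrt hx
    rw [abs_of_nonneg (by positivity), div_le_one (by positivity)]
    linarith

lemma hasDerivAt_Fell_integral {κ : ℝ} (hκ : 0 ≤ κ) :
    HasDerivAt Fell (∫ φ in (0:ℝ)..(π / 2),
      -(1 / (2 * ((1 + κ * sin φ ^ 2) * √(1 + κ * sin φ ^ 2)))) * sin φ ^ 2) κ := by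
  refine hasDerivAt_integral_weight (g := fun x => 1 / √x)
    (g' := fun x => -(1 / (2 * (x * √x)))) (C := 2) ?_ ?_ ?_ hκ
  · intro x hx
    have h := half_le_sqrt hx
    have h0 : √x ≠ 0 := by positivity
    have h1 := (Real.hasDerivAt_sqrt (by linarith : x ≠ 0)).inv h0
    rw [Real.sq_sqrt (by linarith)] at h1
    have h2 : (fun x : ℝ => 1 / √x) = (fun x : ℝ => √x)⁻¹ := by
      ext y
      simp
    rw [h2]
    refine h1.congr_deriv ?_
    field_simp
  · refine (continuousOn_const.div (by fun_prop) fun x hx => ?_).neg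
    have := half_le_sqrt hx
    have : 0 < x := lt_of_lt_of_le (by norm_num) (Set.mem_Ici.1 hx)
    positivity
  · intro x hx
    have := half_le_sqrt hx
    have : 0 < x := by linarith
    rw [abs_neg, abs_of_nonneg (by positivity), div_le_iff₀ (by positivity)]
    nlinarith

/-! ### The differential system for `E` and `F` -/

section Weights

variable {κ : ℝ}

lemma continuous_sqrt_weight : Continuous fun φ : ℝ => √(1 + κ * sin φ ^ 2) := by fun_prop

lemma sqrt_weight_pos (hκ : 0 ≤ κ) (φ : ℝ) : 0 < √(1 + κ * sin φ ^ 2) :=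
  Real.sqrt_pos.2 (by linarith [weight_ge_one hκ φ])

lemma continuous_inv_sqrt_weight (hκ : 0 ≤ κ) :
    Continuous fun φ : ℝ => 1 / √(1 + κ * sin φ ^ 2) :=
  continuous_const.div (by fun_prop) fun φ => (sqrt_weight_pos hκ φ).ne'

lemma continuous_inv_weight_mul_sqrt (hκ : 0 ≤ κ) :
    Continuous fun φ : ℝ => 1 / ((1 + κ * sin φ ^ 2) * √(1 + κ * sin φ ^ 2)) :=
  continuous_const.div (by fun_prop) fun φ => by
    have h1 := sqrt_weight_pos hκ φ
    have h2 := weight_ge_one hκ φ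
    positivity

/-- The reduction formula `(1 + κ) ∫ w^{-3/2} = E`: the function `(1 + κ) w^{-3/2} - √w` is the
derivative of `κ sin φ cos φ / √w`, which vanishes at both endpoints. -/
lemma integral_inv_weight_mul_sqrt (hκ : 0 ≤ κ) :
    (1 + κ) * ∫ φ in (0:ℝ)..(π / 2), 1 / ((1 + κ * sin φ ^ 2) * √(1 + κ * sin φ ^ 2)) = Eell κ := by
  have hd : ∀ φ : ℝ, HasDerivAt (fun φ => κ * (sin φ * cos φ / √(1 + κ * sin φ ^ 2)))
      ((1 + κ) * (1 / ((1 + κ * sin φ ^ 2) * √(1 + κ * sin φ ^ 2))) - √(1 + κ * sin φ ^ 2)) φ := by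
    intro φ
    have hw := weight_ge_one hκ φ
    have hs := sqrt_weight_pos hκ φ
    have h1 : HasDerivAt (fun φ => 1 + κ * sin φ ^ 2) (κ * (2 * sin φ * cos φ)) φ := by
      simpa using (((hasDerivAt_sin φ).pow 2).const_mul κ).const_add 1
    have h2 := h1.sqrt (by linarith)
    have h3 := ((((hasDerivAt_sin φ).mul (hasDerivAt_cos φ)).div h2 hs.ne')).const_mul κ
    refine h3.congr_deriv ?_
    have hq := Real.sq_sqrt (by linarith : 0 ≤ 1 + κ * sin φ ^ 2)
    have hc := Real.cos_sq' φ
    simp only [Pi.mul_apply]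
    set r := √(1 + κ * sin φ ^ 2) with hr
    have hk : κ * sin φ ^ 2 = r ^ 2 - 1 := by linarith
    have hkc : κ * cos φ ^ 2 = κ - (r ^ 2 - 1) := by rw [hc]; linarith
    have e1 : κ * ((cos φ * cos φ + sin φ * -sin φ) * r -
        sin φ * cos φ * (κ * (2 * sin φ * cos φ) / (2 * r))) / r ^ 2 =
        ((κ * cos φ ^ 2 - κ * sin φ ^ 2) * r ^ 2 - (κ * sin φ ^ 2) * (κ * cos φ ^ 2)) / r ^ 3 := by
      field_simp
      ring
    rw [← mul_div_assoc, e1, hkc, hk, add_sub_cancel]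
    field_simp
    ring
  have hi : IntervalIntegrable (fun φ : ℝ => √(1 + κ * sin φ ^ 2)) MeasureTheory.volume 0 (π / 2) :=
    continuous_sqrt_weight.intervalIntegrable _ _
  have hj : IntervalIntegrable
      (fun φ : ℝ => (1 + κ) * (1 / ((1 + κ * sin φ ^ 2) * √(1 + κ * sin φ ^ 2))))
      MeasureTheory.volume 0 (π / 2) :=
    (continuous_const.mul (continuous_inv_weight_mul_sqrt hκ)).intervalIntegrable _ _
  have h := intervalIntegral.integral_eq_sub_of_hasDerivAt (a := 0) (b := π / 2)
    (fun φ _ => hd φ) (hj.sub hi)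
  rw [intervalIntegral.integral_sub hj hi, intervalIntegral.integral_const_mul] at h
  rw [Eell]
  simpa [sub_eq_zero] using h

lemma hasDerivAt_Eell (hκ : 0 < κ) : HasDerivAt Eell ((Eell κ - Fell κ) / (2 * κ)) κ := by
  refine (hasDerivAt_Eell_integral hκ.le).congr_deriv ?_
  rw [eq_div_iff (by positivity), Eell, Fell, ← intervalIntegral.integral_sub
    (continuous_sqrt_weight.intervalIntegrable _ _)
    ((continuous_inv_sqrt_weight hκ.le).intervalIntegrable _ _),
    ← intervalIntegral.integral_mul_const]
  refine intervalIntegral.integral_congr fun φ _ => ?_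
  have hs := sqrt_weight_pos hκ.le φ
  have hq := Real.sq_sqrt (by linarith [weight_ge_one hκ.le φ] : 0 ≤ 1 + κ * sin φ ^ 2)
  field_simp
  linarith

lemma hasDerivAt_Fell (hκ : 0 < κ) :
    HasDerivAt Fell ((Eell κ - (1 + κ) * Fell κ) / (2 * κ * (1 + κ))) κ := by
  refine (hasDerivAt_Fell_integral hκ.le).congr_deriv ?_
  rw [← integral_inv_weight_mul_sqrt hκ.le, ← mul_sub, Fell, ← intervalIntegral.integral_sub
    ((continuous_inv_weight_mul_sqrt hκ.le).intervalIntegrable _ _)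
    ((continuous_inv_sqrt_weight hκ.le).intervalIntegrable _ _),
    eq_div_iff (by positivity), ← intervalIntegral.integral_mul_const,
    ← intervalIntegral.integral_const_mul]
  refine intervalIntegral.integral_congr fun φ _ => ?_
  have hs := sqrt_weight_pos hκ.le φ
  have hw := weight_ge_one hκ.le φ
  have hw' : 0 < 1 + κ * sin φ ^ 2 := by linarith
  field_simp
  ring

/-! ### Bounds for `E / F` -/

lemma Fell_pos (hκ : 0 ≤ κ) : 0 < Fell κ :=
  intervalIntegral.intervalIntegral_pos_of_pos
    ((continuous_inv_sqrt_weight hκ).intervalIntegrable _ _)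
    (fun φ => one_div_pos.2 (sqrt_weight_pos hκ φ)) (by positivity)

lemma Fell_le_Eell (hκ : 0 ≤ κ) : Fell κ ≤ Eell κ := by
  refine intervalIntegral.integral_mono_on (by positivity)
    ((continuous_inv_sqrt_weight hκ).intervalIntegrable _ _)
    (continuous_sqrt_weight.intervalIntegrable _ _) fun φ _ => ?_
  have h : 1 ≤ √(1 + κ * sin φ ^ 2) := Real.one_le_sqrt.2 (weight_ge_one hκ φ)
  rw [div_le_iff₀ (by linarith)]
  nlinarith

/-- The Chebyshev-type bound: comparing the weight `1/√w` with its value `c` at `sin² φ = 1/2`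
gives `(sin² φ - 1/2) / √w ≤ c (sin² φ - 1/2)` pointwise, and the right-hand side has integral
zero. -/
lemma Eell_le_mul_Fell (hκ : 0 ≤ κ) : Eell κ ≤ (1 + κ / 2) * Fell κ := by
  set c : ℝ := 1 / √(1 + κ / 2) with hc
  have hcont := continuous_inv_sqrt_weight hκ
  have hcont' : Continuous fun φ : ℝ => (1 + κ / 2) * (1 / √(1 + κ * sin φ ^ 2)) :=
    continuous_const.mul hcont
  have hsin : Continuous fun φ : ℝ => sin φ ^ 2 := by fun_prop
  have h0 : ∫ φ in (0:ℝ)..(π / 2), κ * c * (sin φ ^ 2 - 1 / 2) = 0 := by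
    rw [intervalIntegral.integral_const_mul, intervalIntegral.integral_sub
      (hsin.intervalIntegrable _ _) intervalIntegrable_const, integral_sin_sq]
    simp
    right
    ring
  rw [Eell, Fell, ← intervalIntegral.integral_const_mul, ← sub_nonpos,
    ← intervalIntegral.integral_sub (continuous_sqrt_weight.intervalIntegrable _ _)
      (hcont'.intervalIntegrable _ _)]
  refine le_trans ?_ h0.le
  refine intervalIntegral.integral_mono_on (by positivity)
    ((continuous_sqrt_weight.sub hcont').intervalIntegrable _ _)
    ((continuous_const.mul (hsin.sub continuous_const)).intervalIntegrable _ _) fun φ _ => ?_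
  have hs := sqrt_weight_pos hκ φ
  have hq := Real.sq_sqrt (by linarith [weight_ge_one hκ φ] : 0 ≤ 1 + κ * sin φ ^ 2)
  have hm : 0 < √(1 + κ / 2) := Real.sqrt_pos.2 (by positivity)
  have hmq := Real.sq_sqrt (by positivity : 0 ≤ 1 + κ / 2)
  rw [hc]
  set r := √(1 + κ * sin φ ^ 2)
  set m := √(1 + κ / 2)
  have e1 : κ * (1 / m) * (sin φ ^ 2 - 1 / 2) = (r ^ 2 - m ^ 2) / m := by
    rw [hq, hmq]; field_simp; ring
  have e2 : r - (1 + κ / 2) * (1 / r) = (r ^ 2 - m ^ 2) / r := by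
    rw [hmq]; field_simp
  rw [e1, e2, div_le_div_iff₀ hs hm]
  nlinarith [mul_nonneg (add_pos hs hm).le (sq_nonneg (r - m))]

/-! ### Continuity and strict monotonicity of `H` -/

lemma continuousOn_Hfun : ContinuousOn Hfun (Set.Ici 0) := by
  have hE : ContinuousOn Eell (Set.Ici 0) := fun κ hκ =>
    (hasDerivAt_Eell_integral hκ).continuousAt.continuousWithinAt
  have hF : ContinuousOn Fell (Set.Ici 0) := fun κ hκ =>
    (hasDerivAt_Fell_integral hκ).continuousAt.continuousWithinAt
  unfold Hfun
  fun_prop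

lemma hasDerivAt_Hfun (hκ : 0 < κ) :
    HasDerivAt Hfun ((3 * Eell κ ^ 2 - 2 * (2 + κ) * Eell κ * Fell κ + (1 + κ) * Fell κ ^ 2) /
      (3 * κ * (1 + κ))) κ := by
  have hE := hasDerivAt_Eell hκ
  have hF := hasDerivAt_Fell hκ
  have hl : HasDerivAt (fun κ : ℝ => (2 + κ) / 3) (1 / 3) κ :=
    ((hasDerivAt_id κ).const_add 2).div_const 3
  refine ((hF.const_mul 2).mul (hE.sub (hl.mul hF))).congr_deriv ?_
  simp only [Pi.sub_apply, Pi.mul_apply]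
  field_simp
  ring

lemma strictAntiOn_Hfun : StrictAntiOn Hfun (Set.Ici 0) := by
  refine strictAntiOn_of_deriv_neg (convex_Ici 0) continuousOn_Hfun fun κ hκ => ?_
  rw [interior_Ici, Set.mem_Ioi] at hκ
  rw [(hasDerivAt_Hfun hκ).deriv]
  refine div_neg_of_neg_of_pos ?_ (by positivity)
  have hF := Fell_pos hκ.le
  have h1 := Fell_le_Eell hκ.le
  have h2 := Eell_le_mul_Fell hκ.le
  set E := Eell κ
  set F := Fell κ
  set a := E - F with ha
  set b := (1 + κ / 2) * F - E with hb
  have ha0 : 0 ≤ a := by linarith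
  have hb0 : 0 ≤ b := by linarith
  have hab : a + b = κ / 2 * F := by rw [ha, hb]; ring
  -- Linear interpolation of the quadratic between the ends of `F ≤ E ≤ (1 + κ/2) F`, with the
  -- convexity defect `-3 a b`.
  have hQ : 3 * E ^ 2 - 2 * (2 + κ) * E * F + (1 + κ) * F ^ 2 =
      -(3 * a * b + F * (2 * b + κ / 2 * a)) := by rw [ha, hb]; ring
  have h3 : 0 < 2 * b + κ / 2 * a := by
    rcases ha0.eq_or_lt with h | h
    · have : 0 < b := by rw [← h, zero_add] at hab; rw [hab]; positivity
      positivity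
    · positivity
  rw [hQ, neg_lt_zero]
  positivity

/-! ### Large `κ` -/

/-- Negativity for `t = √κ ≥ e⁶`: there `log (1 + t π/2) ≥ 6`, so `(2 + κ) F / 3 ≥ 2 t`, which
exceeds `t + π/2 ≥ E`. -/
lemma Hfun_neg_of_large (hκ : exp 6 ^ 2 ≤ κ) : Hfun κ < 0 := by
  have hκ0 : 0 ≤ κ := le_trans (by positivity) hκ
  set t := √κ with ht
  have htq : t ^ 2 = κ := Real.sq_sqrt hκ0
  have hte : exp 6 ≤ t := Real.le_sqrt_of_sq_le hκ
  have ht7 : 7 ≤ t := by linarith [Real.add_one_le_exp (6:ℝ)]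
  have ht0 : 0 < t := by linarith
  have hw : ∀ φ ∈ Set.Icc 0 (π / 2), √(1 + κ * sin φ ^ 2) ≤ 1 + t * sin φ := by
    intro φ hφ
    have hs : 0 ≤ sin φ := sin_nonneg_of_nonneg_of_le_pi hφ.1 (by linarith [hφ.2, pi_pos])
    refine Real.sqrt_le_iff.2 ⟨by positivity, ?_⟩
    rw [← htq]
    nlinarith [mul_nonneg ht0.le hs]
  have hE : Eell κ ≤ π / 2 + t := by
    have h : ∫ φ in (0:ℝ)..(π / 2), (1 + t * sin φ) = π / 2 + t := by
      rw [intervalIntegral.integral_add intervalIntegrable_const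
        (Continuous.intervalIntegrable (by fun_prop) _ _), intervalIntegral.integral_const_mul,
        integral_sin]
      simp
    rw [← h]
    exact intervalIntegral.integral_mono_on (by positivity)
      (continuous_sqrt_weight.intervalIntegrable _ _)
      (Continuous.intervalIntegrable (by fun_prop) _ _) hw
  have hF : log (1 + t * (π / 2)) / t ≤ Fell κ := by
    have hpos : ∀ φ ∈ Set.uIcc 0 (π / 2), 1 + t * φ ≠ 0 := by
      intro φ hφ
      rw [Set.uIcc_of_le (by positivity)] at hφ
      have := mul_nonneg ht0.le hφ.1
      positivity
    have hint : IntervalIntegrable (fun φ : ℝ => 1 / (1 + t * φ)) MeasureTheory.volume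
        0 (π / 2) :=
      (continuousOn_const.div (by fun_prop) hpos).intervalIntegrable
    have h := intervalIntegral.integral_eq_sub_of_hasDerivAt (a := 0) (b := π / 2)
      (f := fun φ => log (1 + t * φ) / t) (f' := fun φ => 1 / (1 + t * φ)) (fun φ hφ => by
        have h1 : HasDerivAt (fun φ => 1 + t * φ) t φ := by
          simpa using ((hasDerivAt_id φ).const_mul t).const_add 1
        refine ((h1.log (hpos φ hφ)).div_const t).congr_deriv ?_
        field_simp) hint
    simp only [mul_zero, add_zero, log_one, zero_div, sub_zero] at h
    rw [← h]
    refine intervalIntegral.integral_mono_on (by positivity) hint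
      ((continuous_inv_sqrt_weight hκ0).intervalIntegrable _ _) fun φ hφ => ?_
    refine one_div_le_one_div_of_le (sqrt_weight_pos hκ0 φ) ((hw φ hφ).trans ?_)
    have := mul_le_mul_of_nonneg_left (sin_le hφ.1) ht0.le
    linarith
  have hlog : 6 ≤ log (1 + t * (π / 2)) := by
    rw [Real.le_log_iff_exp_le (by positivity)]
    nlinarith [pi_gt_three]
  have hF6 : 6 / t ≤ Fell κ := le_trans (by gcongr) hF
  rw [div_le_iff₀ ht0] at hF6
  have hFp := Fell_pos hκ0
  refine mul_neg_of_pos_of_neg (by positivity) ?_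
  have : 6 * t ≤ κ * Fell κ := by
    have h : κ * Fell κ = t * (Fell κ * t) := by linear_combination (-Fell κ) * htq
    rw [h]
    nlinarith
  linarith [pi_lt_four]

end Weights

/-! ### The value at zero and the equation `H(κ) = 2π²/(3k²)` -/

lemma Hfun_zero : Hfun 0 = π ^ 2 / 6 := by
  simp [Hfun, Eell, Fell]
  ring

theorem Hfun_properties :
    Hfun 0 = π ^ 2 / 6 ∧
    ContinuousOn Hfun (Set.Ici 0) ∧
    StrictAntiOn Hfun (Set.Ici 0) ∧
    (∃ K : ℝ, ∀ κ : ℝ, K ≤ κ → Hfun κ < 0) ∧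
    (∀ k : ℕ, 3 ≤ k →
      ∃! κ : ℝ, 0 < κ ∧ Hfun κ = 2 * π ^ 2 / (3 * (k : ℝ) ^ 2)) ∧
    (∀ κ : ℝ, 0 ≤ κ → (Hfun κ = 2 * π ^ 2 / (3 * (2 : ℝ) ^ 2) ↔ κ = 0)) := by
  refine ⟨Hfun_zero, continuousOn_Hfun, strictAntiOn_Hfun,
    ⟨exp 6 ^ 2, fun κ => Hfun_neg_of_large⟩, fun k hk => ?_, fun κ hκ => ?_⟩
  · have hk' : (3:ℝ) ≤ k := by exact_mod_cast hk
    have hv0 : 0 < 2 * π ^ 2 / (3 * (k : ℝ) ^ 2) := by positivity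
    have hv1 : 2 * π ^ 2 / (3 * (k : ℝ) ^ 2) < Hfun 0 := by
      rw [Hfun_zero, div_lt_div_iff₀ (by positivity) (by positivity)]
      nlinarith [mul_pos (sq_pos_of_pos pi_pos) (by nlinarith : 0 < (k:ℝ) ^ 2 - 4)]
    obtain ⟨κ, hκ, hκv⟩ := intermediate_value_Icc' (by positivity : (0:ℝ) ≤ exp 6 ^ 2)
      (continuousOn_Hfun.mono Set.Icc_subset_Ici_self)
      ⟨(Hfun_neg_of_large le_rfl).le.trans hv0.le, hv1.le⟩
    refine ⟨κ, ⟨lt_of_le_of_ne hκ.1 ?_, hκv⟩, fun y hy => ?_⟩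
    · rintro rfl
      exact hv1.ne' hκv
    · exact strictAntiOn_Hfun.injOn hy.1.le hκ.1 (hy.2.trans hκv.symm)
  · have h0 : 2 * π ^ 2 / (3 * (2 : ℝ) ^ 2) = Hfun 0 := by rw [Hfun_zero]; ring
    rw [h0]
    exact strictAntiOn_Hfun.injOn.eq_iff hκ Set.self_mem_Ici
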